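/- Let q : ℤ × ℤ → (ℝ → ℝ), differentiable in x, satisfy the semidiscrete Toda lattice b_n(j) − b_{n+1}(j) = h_n(j) − h_n(j−1) for all n, j, where b_n(j) := q_{n,x}(j) and h_n(j) := exp(q_{n+1}(j+1) − q_n(j)). Fix an integer k ≥ 2 and let B^{k−1}, B^{k}, B^{k+1} : ℤ × ℤ → (ℝ → ℝ) be differentiable in x and satisfy: B^{k}_n(j) − B^{k}_{n+1}(j) = h_n(j) B^{k−1}_{n+1}(j+1) − h_{n+k−1}(j+k−1) B^{k−1}_{n+1}(j); B^{k+1}_n(j) − B^{k+1}_{n+1}(j) = h_n(j) B^{k}_{n+1}(j+1) − h_{n+k}(j+k) B^{k}_{n+1}(j); and ∂_x B^{k−1}_n(j) = B^{k−1}_n(j)( b_{n+k−1}(j+k−1) − b_n(j) ) + h_{n+k−2}(j+k−2)( B^{k−1}_n(j−1) − B^{k−1}_n(j) ) + B^{k}_n(j) − B^{k}_n(j−1), for all n, j. Then for all n, j: ∂_x[ h_n(j) B^{k−1}_{n+1}(j+1) − h_{n+k−1}(j+k−1) B^{k−1}_{n+1}(j) ] = R_n(j) − R_{n+1}(j), where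 R_n(j) := B^{k}_n(j)( b_{n+k}(j+k) − b_n(j) ) + h_{n+k−1}(j+k−1)( B^{k}_n(j−1) − B^{k}_n(j) ) + B^{k+1}_n(j) − B^{k+1}_n(j−1). Hence the two defining equations for the semidiscrete nonlocal variable b_n^{(k)}(j) are compatible, compatibility being provided by the first equation at level k+1. -/

import Mathlib

/-!
Write `∂` and `δ` for the differences in `n` and `j`, and `D` for the `x`-derivative. The equations
for the nonlocal variables read `∂ b⁽ᵏ⁾ = N_k b⁽ᵏ⁻¹⁾` and `D b⁽ᵏ⁾ = L_k b⁽ᵏ⁾ + δ b⁽ᵏ⁺¹⁾`. On a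
solution of the Toda lattice the operators satisfy `Ṅ_k + N_k L_{k-1} = L_k N_k`, where `Ṅ_k` is
`N_k` with differentiated coefficients, and `∂ L_k + δ N_{k+1} = L_k ∂ + N_k δ`. Therefore
```
D (N_k b⁽ᵏ⁻¹⁾) = (Ṅ_k + N_k L_{k-1}) b⁽ᵏ⁻¹⁾ + N_k δ b⁽ᵏ⁾ = (L_k ∂ + N_k δ) b⁽ᵏ⁾
  = (∂ L_k + δ N_{k+1}) b⁽ᵏ⁾ = ∂ (L_k b⁽ᵏ⁾ + δ b⁽ᵏ⁺¹⁾).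
```
Besides `(h, b)`, the coefficients of `N_k` and `L_k` involve only its translates along the
diagonal, about which nothing matters except that they solve the same lattice. The translate by
`k - 1` is therefore replaced by an arbitrary second solution `(h', b')`.
-/

namespace SemidiscreteToda

section Operators

variable {α G R : Type*} [AddCommGroup G] [CommRing R]

/-- The difference `∂ₙ fₙ(j) = fₙ(j) - fₙ₊₁(j)`, with the paper's sign. -/
def nDiff (f : ℤ → ℤ → G) : ℤ → ℤ → G := fun n j => f n j - f (n + 1) j

/-- The backward difference `fₙ(j) - fₙ(j - 1)` in the second index. -/
def jDiff (f : ℤ → ℤ → G) : ℤ → ℤ → G := fun n j => f n j - f n (j - 1)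

/-- The translate `fₙ₊ₘ(j + m)` of a lattice function along the diagonal. -/
def diagShift (m : ℤ) (f : ℤ → ℤ → α) : ℤ → ℤ → α := fun n j => f (n + m) (j + m)

/-- The operator `N` in the equation `∂ₙ b⁽ᵏ⁾ = N b⁽ᵏ⁻¹⁾` for the nonlocal variables; for `N = N_k`,
take `h' = diagShift (k - 1) h`. -/
def transfer (h h' B : ℤ → ℤ → R) : ℤ → ℤ → R :=
  fun n j => h n j * B (n + 1) (j + 1) - h' n j * B (n + 1) j

/-- The operator `L` in the equation `∂ₓ b⁽ᵏ⁾ = L b⁽ᵏ⁾ + jDiff b⁽ᵏ⁺¹⁾` for the nonlocal variables;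
for `L = L_k`, take `h' = diagShift k h` and `b' = diagShift k b`. -/
def evolution (b h' b' B : ℤ → ℤ → R) : ℤ → ℤ → R :=
  fun n j => B n j * (b' n j - b n j) + h' (n - 1) (j - 1) * (B n (j - 1) - B n j)

theorem nDiff_add (f g : ℤ → ℤ → G) : nDiff (f + g) = nDiff f + nDiff g := by
  ext n j
  exact add_sub_add_comm _ _ _ _

theorem nDiff_jDiff (f : ℤ → ℤ → G) : nDiff (jDiff f) = jDiff (nDiff f) := by
  ext n j
  exact sub_sub_sub_comm _ _ _ _

theorem diagShift_diagShift (m l : ℤ) (f : ℤ → ℤ → α) :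
    diagShift m (diagShift l f) = diagShift (m + l) f := by
  ext n j
  simp only [diagShift, add_assoc]

theorem diagShift_one_diagShift_sub_one (m : ℤ) (f : ℤ → ℤ → α) :
    diagShift 1 (diagShift (m - 1) f) = diagShift m f := by
  rw [diagShift_diagShift, add_sub_cancel]

theorem diagShift_sub_one (m : ℤ) (f : ℤ → ℤ → α) :
    diagShift (m - 1) f = fun n j => f (n + m - 1) (j + m - 1) := by
  ext n j
  simp only [diagShift, add_sub_assoc]

theorem evolution_diagShift_add_jDiff (m : ℤ) (h b B C : ℤ → ℤ → R) :
    evolution b (diagShift m h) (diagShift m b) B + jDiff C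
      = fun n j => B n j * (b (n + m) (j + m) - b n j)
        + h (n + m - 1) (j + m - 1) * (B n (j - 1) - B n j) + C n j - C n (j - 1) := by
  ext n j
  simp only [evolution, jDiff, diagShift, Pi.add_apply, sub_add_eq_add_sub, add_sub_assoc]

theorem transfer_add (h h' B C : ℤ → ℤ → R) :
    transfer h h' (B + C) = transfer h h' B + transfer h h' C := by
  ext n j
  simp only [transfer, Pi.add_apply]
  ring

theorem transfer_evolution {h b h' b' : ℤ → ℤ → R}
    (toda : nDiff b = jDiff h) (toda' : nDiff b' = jDiff h') (B : ℤ → ℤ → R) :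
    transfer (h * (diagShift 1 b - b)) (h' * (diagShift 1 b' - b')) B
        + transfer h h' (evolution b h' b' B)
      = evolution b (diagShift 1 h') (diagShift 1 b') (transfer h h' B) := by
  ext n j
  have toda_nj : b n j - b (n + 1) j = h n j - h n (j - 1) := congr_fun₂ toda n j
  have toda'_nj : b' n j - b' (n + 1) j = h' n j - h' n (j - 1) := congr_fun₂ toda' n j
  simp only [transfer, evolution, diagShift, Pi.add_apply, Pi.mul_apply, Pi.sub_apply,
    sub_add_cancel, add_sub_cancel_right]
  linear_combination h' n j * B (n + 1) j * (toda'_nj - toda_nj)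

theorem nDiff_evolution_add_jDiff_transfer {h b h' b' : ℤ → ℤ → R}
    (toda : nDiff b = jDiff h) (toda' : nDiff b' = jDiff h') (B : ℤ → ℤ → R) :
    nDiff (evolution b (diagShift 1 h') (diagShift 1 b') B)
        + jDiff (transfer h (diagShift 1 h') B)
      = evolution b (diagShift 1 h') (diagShift 1 b') (nDiff B) + transfer h h' (jDiff B) := by
  ext n j
  have toda_nj : b n j - b (n + 1) j = h n j - h n (j - 1) := congr_fun₂ toda n j
  have toda'_shift : b' (n + 1) (j + 1) - b' (n + 1 + 1) (j + 1)
      = h' (n + 1) (j + 1) - h' (n + 1) j := by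
    simpa only [nDiff, jDiff, add_sub_cancel_right] using congr_fun₂ toda' (n + 1) (j + 1)
  simp only [nDiff, jDiff, transfer, evolution, diagShift, Pi.add_apply,
    sub_add_cancel, add_sub_cancel_right]
  linear_combination B (n + 1) j * (toda'_shift - toda_nj)

end Operators

section Solutions

variable {𝕜 A : Type*} [NontriviallyNormedField 𝕜] [NormedCommRing A] [NormedAlgebra 𝕜 A]

/-- Solutions of the semidiscrete Toda lattice in the variables `h` and `b`. The definition of `h`
by a potential, `hₙ(j) = exp (qₙ₊₁(j + 1) - qₙ(j))`, is replaced by its derivative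
`∂ₓ hₙ(j) = hₙ(j) (bₙ₊₁(j + 1) - bₙ(j))`, which makes sense in any commutative normed algebra. -/
structure IsSolution (h b : ℤ → ℤ → 𝕜 → A) : Prop where
  hasDerivAt : ∀ n j x, HasDerivAt (h n j) ((h * (diagShift 1 b - b)) n j x) x
  nDiff_eq : nDiff b = jDiff h

theorem isSolution_of_potential {q h b : ℤ → ℤ → ℝ → ℝ} (hq : ∀ n j, Differentiable ℝ (q n j))
    (hh : ∀ n j x, h n j x = Real.exp (q (n + 1) (j + 1) x - q n j x))
    (hb : ∀ n j x, b n j x = deriv (q n j) x) (toda : nDiff b = jDiff h) :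
    IsSolution h b where
  hasDerivAt n j x := by
    have h_eq : h n j = fun t => Real.exp (q (n + 1) (j + 1) t - q n j t) := funext (hh n j)
    simp only [Pi.mul_apply, Pi.sub_apply, diagShift, hb, h_eq]
    exact ((hq (n + 1) (j + 1) x).hasDerivAt.sub (hq n j x).hasDerivAt).exp
  nDiff_eq := toda

theorem IsSolution.diagShift {h b : ℤ → ℤ → 𝕜 → A} (sol : IsSolution h b) (m : ℤ) :
    IsSolution (diagShift m h) (diagShift m b) where
  hasDerivAt n j x := by
    simpa only [SemidiscreteToda.diagShift, Pi.mul_apply, Pi.sub_apply, add_right_comm _ m 1]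
      using sol.hasDerivAt (n + m) (j + m) x
  nDiff_eq := by
    ext n j : 2
    simpa only [nDiff, jDiff, SemidiscreteToda.diagShift, add_right_comm _ m 1,
      add_sub_right_comm _ m 1] using congr_fun₂ sol.nDiff_eq (n + m) (j + m)

theorem hasDerivAt_transfer {h h' B dh dh' dB : ℤ → ℤ → 𝕜 → A} {x : 𝕜}
    (hasDerivAt_h : ∀ n j, HasDerivAt (h n j) (dh n j x) x)
    (hasDerivAt_h' : ∀ n j, HasDerivAt (h' n j) (dh' n j x) x)
    (hasDerivAt_B : ∀ n j, HasDerivAt (B n j) (dB n j x) x) (n j : ℤ) :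
    HasDerivAt (transfer h h' B n j) ((transfer dh dh' B + transfer h h' dB) n j x) x := by
  have product_rule := ((hasDerivAt_h n j).mul (hasDerivAt_B (n + 1) (j + 1))).sub
    ((hasDerivAt_h' n j).mul (hasDerivAt_B (n + 1) j))
  refine product_rule.congr_deriv ?_
  simp only [transfer, Pi.add_apply, Pi.sub_apply, Pi.mul_apply]
  ring

end Solutions

end SemidiscreteToda

open SemidiscreteToda

theorem semidiscrete_nonlocal_variables_compatibility_general {𝕜 A : Type*}
    [NontriviallyNormedField 𝕜] [NormedCommRing A] [NormedAlgebra 𝕜 A]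
    {h b h' b' B₀ B₁ B₂ : ℤ → ℤ → 𝕜 → A} (sol : IsSolution h b) (sol' : IsSolution h' b')
    (nDiff_B₁ : nDiff B₁ = transfer h h' B₀)
    (nDiff_B₂ : nDiff B₂ = transfer h (diagShift 1 h') B₁)
    (hasDerivAt_B₀ : ∀ n j x, HasDerivAt (B₀ n j) ((evolution b h' b' B₀ + jDiff B₁) n j x) x)
    (n j : ℤ) (x : 𝕜) :
    HasDerivAt (transfer h h' B₀ n j)
      (nDiff (evolution b (diagShift 1 h') (diagShift 1 b') B₁ + jDiff B₂) n j x) x := by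
  have cross_derivatives :
      transfer (h * (diagShift 1 b - b)) (h' * (diagShift 1 b' - b')) B₀
          + transfer h h' (evolution b h' b' B₀ + jDiff B₁)
        = nDiff (evolution b (diagShift 1 h') (diagShift 1 b') B₁ + jDiff B₂) := by
    rw [transfer_add, ← add_assoc, transfer_evolution sol.nDiff_eq sol'.nDiff_eq, ← nDiff_B₁,
      ← nDiff_evolution_add_jDiff_transfer sol.nDiff_eq sol'.nDiff_eq, ← nDiff_B₂, ← nDiff_jDiff,
      nDiff_add]
  rw [← cross_derivatives]
  exact hasDerivAt_transfer (sol.hasDerivAt · · x) (sol'.hasDerivAt · · x)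
    (hasDerivAt_B₀ · · x) n j

/-- compatibility of the two defining equations of the semidiscrete
nonlocal variable `bₙ⁽ᵏ⁾(j)`, provided by the first equation at level `k+1`.
Here `Bkm, Bk, Bkp` play the roles of `b⁽ᵏ⁻¹⁾, b⁽ᵏ⁾, b⁽ᵏ⁺¹⁾`, the difference
operator is `∂ₙ fₙ = fₙ − f_{n+1}`, and
`Rₙ(j) = Bᵏₙ(j)(b_{n+k}(j+k) − bₙ(j)) + h_{n+k−1}(j+k−1)(Bᵏₙ(j−1) − Bᵏₙ(j)) + Bᵏ⁺¹ₙ(j) − Bᵏ⁺¹ₙ(j−1)`. -/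
theorem semidiscrete_nonlocal_variables_compatibility
    (q h b : ℤ → ℤ → ℝ → ℝ)
    (hq : ∀ n j, Differentiable ℝ (q n j))
    (hh : ∀ n j x, h n j x = Real.exp (q (n + 1) (j + 1) x - q n j x))
    (hb : ∀ n j x, b n j x = deriv (q n j) x)
    (toda : ∀ (n j : ℤ) (x : ℝ),
        b n j x - b (n + 1) j x = h n j x - h n (j - 1) x)
    (k : ℤ) (hk : 2 ≤ k)
    (Bkm Bk Bkp : ℤ → ℤ → ℝ → ℝ)
    (hBkm : ∀ n j, Differentiable ℝ (Bkm n j))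
    (hBk : ∀ n j, Differentiable ℝ (Bk n j))
    (hBkp : ∀ n j, Differentiable ℝ (Bkp n j))
    (e1 : ∀ (n j : ℤ) (x : ℝ),
        Bk n j x - Bk (n + 1) j x
          = h n j x * Bkm (n + 1) (j + 1) x - h (n + k - 1) (j + k - 1) x * Bkm (n + 1) j x)
    (e2 : ∀ (n j : ℤ) (x : ℝ),
        Bkp n j x - Bkp (n + 1) j x
          = h n j x * Bk (n + 1) (j + 1) x - h (n + k) (j + k) x * Bk (n + 1) j x)
    (e3 : ∀ (n j : ℤ) (x : ℝ),
        deriv (Bkm n j) x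
          = Bkm n j x * (b (n + k - 1) (j + k - 1) x - b n j x)
            + h (n + k - 2) (j + k - 2) x * (Bkm n (j - 1) x - Bkm n j x)
            + Bk n j x - Bk n (j - 1) x)
    (R : ℤ → ℤ → ℝ → ℝ)
    (hR : ∀ (n j : ℤ) (x : ℝ),
        R n j x
          = Bk n j x * (b (n + k) (j + k) x - b n j x)
            + h (n + k - 1) (j + k - 1) x * (Bk n (j - 1) x - Bk n j x)
            + Bkp n j x - Bkp n (j - 1) x) :
    ∀ (n j : ℤ) (x : ℝ),
      deriv (fun t => h n j t * Bkm (n + 1) (j + 1) t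
          - h (n + k - 1) (j + k - 1) t * Bkm (n + 1) j t) x
        = R n j x - R (n + 1) j x := by
  intro n j x
  have sol : IsSolution h b := isSolution_of_potential hq hh hb (by ext n j x; exact toda n j x)
  have nDiff_Bk : nDiff Bk = transfer h (diagShift (k - 1) h) Bkm := by
    rw [diagShift_sub_one]; ext n j x; exact e1 n j x
  have nDiff_Bkp : nDiff Bkp = transfer h (diagShift 1 (diagShift (k - 1) h)) Bk := by
    rw [diagShift_one_diagShift_sub_one]; ext n j x; exact e2 n j x
  have hasDerivAt_Bkm (n j : ℤ) (x : ℝ) : HasDerivAt (Bkm n j)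
      ((evolution b (diagShift (k - 1) h) (diagShift (k - 1) b) Bkm + jDiff Bk) n j x) x := by
    have index₁ (m : ℤ) : m + (k - 1) = m + k - 1 := by ring
    have index₂ (m : ℤ) : m + k - 1 - 1 = m + k - 2 := by ring
    simp only [evolution_diagShift_add_jDiff, index₁, index₂]
    exact (hBkm n j x).hasDerivAt.congr_deriv (e3 n j x)
  have R_eq : evolution b (diagShift k h) (diagShift k b) Bk + jDiff Bkp = R := by
    rw [evolution_diagShift_add_jDiff]; ext n j x; exact (hR n j x).symm
  have compat := semidiscrete_nonlocal_variables_compatibility_general sol (sol.diagShift (k - 1))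
    nDiff_Bk nDiff_Bkp hasDerivAt_Bkm n j x
  rw [diagShift_one_diagShift_sub_one, diagShift_one_diagShift_sub_one, R_eq,
    diagShift_sub_one] at compat
  exact compat.deriv
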